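/- arXiv:1708.09358 — 2 statements merged into one kernel-verified Lean document; each statement's English description precedes it below -/
import Mathlib

section
/- The set Q̂₈ = {±id, ±(i;0), ±j', ±k'} is a subgroup of order 8 of the group of bijections of T = ℍ/𝔞, generated by (i;0) and j' = (j;α), and it is isomorphic to the quaternion group Q₈ of order 8; in particular j'∘j' = −id and (i;0)∘j' = k' = (k;α). -/
/- STATEMENT 4: The set Q̂₈ = {±id, ±(i;0), ±j', ±k'} is a subgroup of order 8 of the
group of bijections of T = ℍ/𝔞, generated by (i;0) and j' = (j;α); it is isomorphic to
the quaternion group Q₈; in particular j'∘j' = −id and (i;0)∘j' = k' = (k;α). -/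

open scoped Quaternion

noncomputable def qi : ℍ[ℝ] := ⟨0, 1, 0, 0⟩
noncomputable def qj : ℍ[ℝ] := ⟨0, 0, 1, 0⟩
noncomputable def qk : ℍ[ℝ] := ⟨0, 0, 0, 1⟩
noncomputable def qt : ℍ[ℝ] := (1 + qi + qj + qk) / 2
noncomputable def qα : ℍ[ℝ] := (1 + qi) / 2

/-- The Hurwitz order `𝔞 = ℤ·1 + ℤ·i + ℤ·j + ℤ·t` as an additive subgroup of `ℍ`. -/
noncomputable def hurwitz : AddSubgroup ℍ[ℝ] := AddSubgroup.closure {1, qi, qj, qt}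

/-- The real torus `T = ℍ/𝔞`. -/
noncomputable abbrev T := ℍ[ℝ] ⧸ hurwitz

/-- The class map `ℍ → T = ℍ/𝔞`. -/
noncomputable def π : ℍ[ℝ] → T := QuotientAddGroup.mk


@[simp] theorem qi_re : qi.re = 0 := rfl
@[simp] theorem qi_imI : qi.imI = 1 := rfl
@[simp] theorem qi_imJ : qi.imJ = 0 := rfl
@[simp] theorem qi_imK : qi.imK = 0 := rfl
@[simp] theorem qj_re : qj.re = 0 := rfl
@[simp] theorem qj_imI : qj.imI = 0 := rfl
@[simp] theorem qj_imJ : qj.imJ = 1 := rfl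
@[simp] theorem qj_imK : qj.imK = 0 := rfl
@[simp] theorem qk_re : qk.re = 0 := rfl
@[simp] theorem qk_imI : qk.imI = 0 := rfl
@[simp] theorem qk_imJ : qk.imJ = 0 := rfl
@[simp] theorem qk_imK : qk.imK = 1 := rfl

theorem pi_eq {x y : ℍ[ℝ]} (h : -x + y ∈ hurwitz) : π x = π y := by
  unfold π
  exact QuotientAddGroup.eq.2 h

theorem one_mem_h : (1 : ℍ[ℝ]) ∈ hurwitz := AddSubgroup.subset_closure (by simp)
theorem qi_mem_h : qi ∈ hurwitz := AddSubgroup.subset_closure (by simp)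
theorem qj_mem_h : qj ∈ hurwitz := AddSubgroup.subset_closure (by simp)
theorem qt_mem_h : qt ∈ hurwitz := AddSubgroup.subset_closure (by simp)

theorem half_eq (x : ℍ[ℝ]) : x / 2 = (2⁻¹ : ℝ) • x := by
  have h : (2 : ℍ[ℝ])⁻¹ = (((2⁻¹ : ℝ)) : ℍ[ℝ]) := by
    rw [Quaternion.coe_inv]; rfl
  rw [div_eq_mul_inv, h, Quaternion.mul_coe_eq_smul]

theorem pi_surj (y : T) : ∃ x, π x = y := QuotientAddGroup.mk_surjective y

theorem mem_h_re {x : ℍ[ℝ]} (h : x ∈ hurwitz) : ∃ n : ℤ, 2 * x.re = n := by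
  induction h using AddSubgroup.closure_induction with
  | mem x hx =>
    simp only [Set.mem_insert_iff, Set.mem_singleton_iff] at hx
    rcases hx with rfl | rfl | rfl | rfl
    · exact ⟨2, by simp⟩
    · exact ⟨0, by simp⟩
    · exact ⟨0, by simp⟩
    · exact ⟨1, by rw [qt, half_eq]; simp⟩
  | zero => exact ⟨0, by simp⟩
  | add x y _ _ hx hy =>
    obtain ⟨n, hn⟩ := hx
    obtain ⟨m, hm⟩ := hy
    exact ⟨n + m, by simp [mul_add, hn, hm]⟩
  | neg x _ hx =>
    obtain ⟨n, hn⟩ := hx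
    exact ⟨-n, by simp [hn]⟩

/-- A homomorphism out of `QuaternionGroup 2` from two elements satisfying the relations. -/
theorem exists_hom {G : Type*} [Group G] (a b : G) (h4 : a ^ 4 = 1) (hb : b * b = a ^ 2)
    (hab : a * b = b * a ^ 3) :
    ∃ φ : QuaternionGroup 2 →* G, (∀ i, φ (.a i) = a ^ i.val) ∧
      (∀ i, φ (.xa i) = b * a ^ i.val) := by
  have hmod : ∀ n : ℕ, a ^ (n % 4) = a ^ n := fun n => by
    conv_rhs => rw [← Nat.mod_add_div n 4, pow_add, pow_mul, h4, one_pow, mul_one]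
  have hadd : ∀ i j : ZMod (2 * 2), a ^ (i + j).val = a ^ i.val * a ^ j.val := fun i j => by
    rw [ZMod.val_add, ← pow_add]; exact hmod _
  have hc : ∀ n : ℕ, a ^ n * b = b * a ^ (3 * n) := by
    intro n
    induction n with
    | zero => simp
    | succ n ih => rw [pow_succ, mul_assoc, hab, ← mul_assoc, ih, mul_assoc, ← pow_add]; rfl
  have hneg : ∀ i : ZMod (2 * 2), a ^ i.val * b = b * a ^ (-i).val := fun i => by
    rw [hc, ← hmod]
    congr 2
    revert i; decide
  let f : QuaternionGroup 2 → G := fun g => match g with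
    | .a i => a ^ i.val
    | .xa i => b * a ^ i.val
  refine ⟨MonoidHom.mk' f ?_, fun i => rfl, fun i => rfl⟩
  rintro (i | i) (j | j)
  · exact hadd i j
  · change b * a ^ (j - i).val = a ^ i.val * (b * a ^ j.val)
    rw [← mul_assoc, hneg, mul_assoc, ← hadd, sub_eq_neg_add]
  · change b * a ^ (i + j).val = b * a ^ i.val * a ^ j.val
    rw [mul_assoc, hadd]
  · change a ^ ((2 : ℕ) + j - i : ZMod (2 * 2)).val = b * a ^ i.val * (b * a ^ j.val)
    have e : ((2 : ℕ) + j - i : ZMod (2 * 2)) = (2 : ℕ) + (-i + j) := by abel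
    rw [mul_assoc, ← mul_assoc (a ^ i.val), hneg, mul_assoc b, ← mul_assoc b b, hb, ← hadd, e,
      hadd]
    rfl

theorem Qhat8_subgroup
    (fi fj fk fneg fnegi fnegj fnegk : Equiv.Perm T)
    (hfi : ∀ x : ℍ[ℝ], fi (π x) = π (qi * x))
    (hfj : ∀ x : ℍ[ℝ], fj (π x) = π (qj * x + qα))
    (hfk : ∀ x : ℍ[ℝ], fk (π x) = π (qk * x + qα))
    (hfneg : ∀ x : ℍ[ℝ], fneg (π x) = π (-x))
    (hfnegi : ∀ x : ℍ[ℝ], fnegi (π x) = π (-(qi * x)))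
    (hfnegj : ∀ x : ℍ[ℝ], fnegj (π x) = π (-(qj * x + qα)))
    (hfnegk : ∀ x : ℍ[ℝ], fnegk (π x) = π (-(qk * x + qα))) :
    ((Subgroup.closure ({fi, fj} : Set (Equiv.Perm T)) : Set (Equiv.Perm T)) =
      {1, fneg, fi, fnegi, fj, fnegj, fk, fnegk}) ∧
    Nat.card (Subgroup.closure ({fi, fj} : Set (Equiv.Perm T))) = 8 ∧
    Nonempty (Subgroup.closure ({fi, fj} : Set (Equiv.Perm T)) ≃* QuaternionGroup 2) ∧
    fj * fj = fneg ∧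
    fi * fj = fk := by
  have two_α : qα + qα = 1 + qi := by
    rw [qα, half_eq, ← add_smul]; norm_num
  have hii : qi * qi = -1 := by ext <;> simp
  have hij : qi * qj = qk := by ext <;> simp
  have hji : qj * qi = -qk := by ext <;> simp
  have hjj : qj * qj = -1 := by ext <;> simp
  have eP : ∀ f g : Equiv.Perm T, (∀ x, f (π x) = g (π x)) → f = g := by
    intro f g h
    ext y
    obtain ⟨x, rfl⟩ := pi_surj y
    exact h x
  have h1 : fi * fi = fneg := eP _ _ fun x => by
    rw [Equiv.Perm.mul_apply, hfi, hfi, hfneg, ← mul_assoc, hii, neg_one_mul]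
  have h2 : fj * fj = fneg := eP _ _ fun x => by
    rw [Equiv.Perm.mul_apply, hfj, hfj, hfneg]
    apply pi_eq
    have : -(qj * (qj * x + qα) + qα) + -x = qt - 1 - qi - qj := by
      rw [mul_add, ← mul_assoc, hjj, qα, qt, half_eq, half_eq]
      ext <;> simp <;> ring
    rw [this]
    exact sub_mem (sub_mem (sub_mem qt_mem_h one_mem_h) qi_mem_h) qj_mem_h
  have h3 : fi * fj = fk := eP _ _ fun x => by
    rw [Equiv.Perm.mul_apply, hfj, hfi, hfk]
    apply pi_eq
    have : -(qi * (qj * x + qα)) + (qk * x + qα) = 1 := by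
      rw [mul_add, ← mul_assoc, hij, qα, half_eq]
      ext <;> simp <;> ring
    rw [this]
    exact one_mem_h
  have h4 : fj * fi = fnegk := eP _ _ fun x => by
    rw [Equiv.Perm.mul_apply, hfi, hfj, hfnegk]
    apply pi_eq
    have : -(qj * (qi * x) + qα) + -(qk * x + qα) = -(1 + qi) := by
      rw [← two_α, ← mul_assoc, hji]; noncomm_ring
    rw [this]
    exact neg_mem (add_mem one_mem_h qi_mem_h)
  have hnn : fneg * fneg = 1 := eP _ _ fun x => by
    rw [Equiv.Perm.mul_apply, hfneg, hfneg, neg_neg]; rfl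
  have hni : fneg * fi = fnegi := eP _ _ fun x => by
    rw [Equiv.Perm.mul_apply, hfi, hfneg, hfnegi]
  have hnj : fneg * fj = fnegj := eP _ _ fun x => by
    rw [Equiv.Perm.mul_apply, hfj, hfneg, hfnegj]
  have hnk : fneg * fk = fnegk := eP _ _ fun x => by
    rw [Equiv.Perm.mul_apply, hfk, hfneg, hfnegk]
  have hne : fneg ≠ 1 := by
    intro h
    have := hfneg ((8⁻¹ : ℝ) : ℍ[ℝ])
    rw [h, Equiv.Perm.one_apply] at this
    obtain ⟨n, hn⟩ := mem_h_re (QuotientAddGroup.eq.1 this)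
    have h2 : (-1 : ℝ) = 2 * n := by
      rw [← hn, Quaternion.re_add, Quaternion.re_neg, Quaternion.re_coe]; norm_num
    have h3 : (-1 : ℤ) = 2 * n := by exact_mod_cast h2
    omega
  have p2 : fi ^ 2 = fneg := by rw [sq, h1]
  have p3 : fi ^ 3 = fnegi := by rw [pow_succ, p2, hni]
  have p4 : fi ^ 4 = 1 := by rw [show 4 = 2 * 2 from rfl, pow_mul, p2, sq, hnn]
  have hjn : fj * fneg = fnegj := by rw [← h2, ← mul_assoc, h2, hnj]
  have hjni : fj * fnegi = fk := by
    rw [← hni, ← mul_assoc, hjn, ← hnj, mul_assoc, h4, ← hnk, ← mul_assoc, hnn, one_mul]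
  obtain ⟨φ, φa, φx⟩ := exists_hom fi fj p4 (by rw [h2, p2]) (by rw [h3, p3, hjni])
  have a0 : φ (.a 0) = 1 := by rw [φa]; exact pow_zero _
  have a1 : φ (.a 1) = fi := by rw [φa]; exact pow_one _
  have a2 : φ (.a 2) = fneg := by rw [φa]; exact p2
  have a3 : φ (.a 3) = fnegi := by rw [φa]; exact p3
  have x0 : φ (.xa 0) = fj := by rw [φx]; exact mul_one _
  have x1 : φ (.xa 1) = fnegk := by rw [φx, ← h4]; exact congrArg (fj * ·) (pow_one fi)
  have x2 : φ (.xa 2) = fnegj := by rw [φx, ← hjn]; exact congrArg (fj * ·) p2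
  have x3 : φ (.xa 3) = fk := by rw [φx, ← hjni]; exact congrArg (fj * ·) p3
  have hinj : Function.Injective φ := by
    rw [injective_iff_map_eq_one]
    intro g hg
    have key : g = 1 ∨ g = .a 2 ∨ g * g = .a 2 := by clear hg; revert g; decide
    rcases key with h | h | h
    · exact h
    · exact absurd (by rw [← a2, ← h, hg]) hne
    · exact absurd (by rw [← a2, ← h, map_mul, hg, one_mul]) hne
  have hcl : Subgroup.closure ({fi, fj} : Set (Equiv.Perm T)) = φ.range := by
    apply le_antisymm
    · rw [Subgroup.closure_le]
      rintro y (rfl | rfl)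
      · exact ⟨_, a1⟩
      · exact ⟨_, x0⟩
    · have mi : fi ∈ Subgroup.closure ({fi, fj} : Set (Equiv.Perm T)) :=
        Subgroup.subset_closure (by simp)
      have mj : fj ∈ Subgroup.closure ({fi, fj} : Set (Equiv.Perm T)) :=
        Subgroup.subset_closure (by simp)
      rintro y ⟨g | g, rfl⟩
      · rw [φa]; exact pow_mem mi _
      · rw [φx]; exact mul_mem mj (pow_mem mi _)
  rw [hcl]
  have e : QuaternionGroup 2 ≃* φ.range := MonoidHom.ofInjective hinj
  refine ⟨?_, ?_, ⟨e.symm⟩, h2, h3⟩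
  · ext y
    simp only [Set.mem_insert_iff, Set.mem_singleton_iff, SetLike.mem_coe]
    constructor
    · rintro ⟨g, rfl⟩
      have key : g = .a 0 ∨ g = .a 1 ∨ g = .a 2 ∨ g = .a 3 ∨ g = .xa 0 ∨ g = .xa 1 ∨
        g = .xa 2 ∨ g = .xa 3 := by revert g; decide
      rcases key with h | h | h | h | h | h | h | h <;> rw [h] <;> simp only [a0, a1, a2, a3, x0, x1, x2, x3, true_or, or_true]
    · rintro (h | h | h | h | h | h | h | h) <;> rw [h]
      · exact ⟨_, a0⟩
      · exact ⟨_, a2⟩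
      · exact ⟨_, a1⟩
      · exact ⟨_, a3⟩
      · exact ⟨_, x0⟩
      · exact ⟨_, x2⟩
      · exact ⟨_, x3⟩
      · exact ⟨_, x1⟩
  · rw [← Nat.card_congr e.toEquiv, Nat.card_eq_fintype_card, QuaternionGroup.card]
end

section
/- Let w be the square of the affine map (t; s/2) : x ↦ t·x + [s/2] of T = ℍ/𝔞, where s = (1+i−j+k)/2. Then w has order exactly 3 (w∘w∘w = id and w ≠ id), w fixes exactly one of the sixteen 2-torsion points of T, and this fixed 2-torsion point is fixed by none of the three maps (i;0), j' = (j;α), k' = (k;α). -/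
/- STATEMENT 10: Let w be the square of (t; s/2) : x ↦ t·x + [s/2] on T = ℍ/𝔞, where
s = (1+i−j+k)/2.  Then w has order exactly 3, w fixes exactly one of the sixteen
2-torsion points of T, and this fixed 2-torsion point is fixed by none of the maps
(i;0), j' = (j;α), k' = (k;α). -/

open scoped Quaternion

noncomputable def qs : ℍ[ℝ] := (1 + qi - qj + qk) / 2

/-- The quaternion with the given coordinates. -/
noncomputable def mkq (a b c d : ℝ) : ℍ[ℝ] := ⟨a, b, c, d⟩

@[simp] theorem mkq_re (a b c d : ℝ) : (mkq a b c d).re = a := rfl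
@[simp] theorem mkq_imI (a b c d : ℝ) : (mkq a b c d).imI = b := rfl
@[simp] theorem mkq_imJ (a b c d : ℝ) : (mkq a b c d).imJ = c := rfl
@[simp] theorem mkq_imK (a b c d : ℝ) : (mkq a b c d).imK = d := rfl

theorem qi_eq : qi = mkq 0 1 0 0 := rfl
theorem qj_eq : qj = mkq 0 0 1 0 := rfl
theorem qk_eq : qk = mkq 0 0 0 1 := rfl

theorem div_two (q : ℍ[ℝ]) : q / 2 = mkq (q.re / 2) (q.imI / 2) (q.imJ / 2) (q.imK / 2) := by
  have h : (2 : ℍ[ℝ]) ≠ 0 := by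
    intro h
    rw [← one_add_one_eq_two] at h
    have := congrArg (fun z : ℍ[ℝ] => z.re) h
    simp only [Quaternion.re_add, Quaternion.re_one, Quaternion.re_zero] at this
    norm_num at this
  rw [div_eq_iff h, mul_two]
  ext <;> simp

theorem qt_eq : qt = mkq (1/2) (1/2) (1/2) (1/2) := by
  rw [qt, div_two]; ext <;> simp [qi_eq, qj_eq, qk_eq]

theorem qα_eq : qα = mkq (1/2) (1/2) 0 0 := by
  rw [qα, div_two]; ext <;> simp [qi_eq]

theorem qs_half_eq : qs / 2 = mkq (1/4) (1/4) (-1/4) (1/4) := by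
  rw [qs, div_two, div_two]; ext <;> simp [qi_eq, qj_eq, qk_eq] <;> norm_num

theorem mem_hurwitz (q : ℍ[ℝ]) : q ∈ hurwitz ↔ ∃ a b c d : ℤ,
    q.re = a + d / 2 ∧ q.imI = b + d / 2 ∧ q.imJ = c + d / 2 ∧ q.imK = d / 2 := by
  constructor
  · intro h
    induction h using AddSubgroup.closure_induction with
    | mem x hx =>
      rcases hx with rfl | rfl | rfl | rfl
      · exact ⟨1, 0, 0, 0, by simp⟩
      · exact ⟨0, 1, 0, 0, by simp [qi_eq]⟩
      · exact ⟨0, 0, 1, 0, by simp [qj_eq]⟩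
      · exact ⟨0, 0, 0, 1, by simp [qt_eq]⟩
    | zero => exact ⟨0, 0, 0, 0, by simp⟩
    | add x y _ _ hx hy =>
      obtain ⟨a, b, c, d, h1, h2, h3, h4⟩ := hx
      obtain ⟨a', b', c', d', g1, g2, g3, g4⟩ := hy
      refine ⟨a + a', b + b', c + c', d + d', ?_, ?_, ?_, ?_⟩ <;>
        simp only [Quaternion.re_add, Quaternion.imI_add, Quaternion.imJ_add,
          Quaternion.imK_add, *] <;> push_cast <;> ring
    | neg x _ hx =>
      obtain ⟨a, b, c, d, h1, h2, h3, h4⟩ := hx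
      refine ⟨-a, -b, -c, -d, ?_, ?_, ?_, ?_⟩ <;>
        simp only [Quaternion.re_neg, Quaternion.imI_neg, Quaternion.imJ_neg,
          Quaternion.imK_neg, *] <;> push_cast <;> ring
  · rintro ⟨a, b, c, d, h1, h2, h3, h4⟩
    have e : q = a • (1 : ℍ[ℝ]) + b • qi + c • qj + d • qt := by
      ext <;> simp [*, qi_eq, qj_eq, qt_eq] <;> ring
    have m : ∀ x ∈ ({1, qi, qj, qt} : Set ℍ[ℝ]), x ∈ hurwitz :=
      fun x hx => AddSubgroup.subset_closure hx
    rw [e]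
    refine add_mem (add_mem (add_mem ?_ ?_) ?_) ?_ <;>
      exact zsmul_mem (m _ (by simp)) _

theorem π_eq (x y : ℍ[ℝ]) : π x = π y ↔ ∃ a b c d : ℤ,
    y.re - x.re = a + d / 2 ∧ y.imI - x.imI = b + d / 2 ∧ y.imJ - x.imJ = c + d / 2 ∧
      y.imK - x.imK = d / 2 := by
  unfold π
  rw [QuotientAddGroup.eq, mem_hurwitz]
  simp [neg_add_eq_sub]

theorem π_surj (x : T) : ∃ q, π q = x := QuotientAddGroup.mk_surjective x

theorem π_two (q : ℍ[ℝ]) : π q + π q = 0 ↔ ∃ a b c d : ℤ,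
    q = mkq (a / 2 + d / 4) (b / 2 + d / 4) (c / 2 + d / 4) (d / 4) := by
  have : π q + π q = π (q + q) := rfl
  have h0 : (0 : T) = π 0 := rfl
  rw [this, h0, eq_comm, π_eq]
  refine exists_congr fun a => exists_congr fun b => exists_congr fun c => exists_congr fun d => ?_
  rw [Quaternion.ext_iff]
  simp only [mkq_re, mkq_imI, mkq_imJ, mkq_imK, Quaternion.re_add, Quaternion.imI_add, Quaternion.imJ_add,
          Quaternion.imK_add, Quaternion.re_zero, Quaternion.imI_zero, Quaternion.imJ_zero,
          Quaternion.imK_zero]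
  constructor <;> rintro ⟨h1, h2, h3, h4⟩ <;> refine ⟨?_, ?_, ?_, ?_⟩ <;> linarith

noncomputable def tors (v : Fin 2 × Fin 2 × Fin 2 × Fin 2) : T :=
  π (mkq ((v.1.val : ℝ) / 2 + v.2.2.2.val / 4) ((v.2.1.val : ℝ) / 2 + v.2.2.2.val / 4)
    ((v.2.2.1.val : ℝ) / 2 + v.2.2.2.val / 4) ((v.2.2.2.val : ℝ) / 4))

theorem tors_inj : Function.Injective tors := by
  rintro ⟨a, b, c, d⟩ ⟨a', b', c', d'⟩ h
  obtain ⟨A, B, C, D, h1, h2, h3, h4⟩ := (π_eq _ _).1 h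
  simp only [mkq_re, mkq_imI, mkq_imJ, mkq_imK] at h1 h2 h3 h4
  have e4 : (d'.val : ℤ) - d.val = 2 * D := by
    have : (d'.val : ℝ) - d.val = 2 * D := by linarith
    exact_mod_cast this
  have e1 : (a'.val : ℤ) - a.val = 2 * A := by
    have : (a'.val : ℝ) - a.val = 2 * A + (D - (d'.val - d.val) / 2) := by linarith
    have : (a'.val : ℝ) - a.val = 2 * A := by linarith
    exact_mod_cast this
  have e2 : (b'.val : ℤ) - b.val = 2 * B := by
    have : (b'.val : ℝ) - b.val = 2 * B := by linarith
    exact_mod_cast this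
  have e3 : (c'.val : ℤ) - c.val = 2 * C := by
    have : (c'.val : ℝ) - c.val = 2 * C := by linarith
    exact_mod_cast this
  simp only [Prod.mk.injEq, Fin.ext_iff]
  omega

theorem tors_range : {x : T | x + x = 0} = Set.range tors := by
  ext x
  obtain ⟨q, rfl⟩ := π_surj x
  simp only [Set.mem_ofPred_eq, Set.mem_range]
  constructor
  · intro h
    obtain ⟨a, b, c, d, rfl⟩ := (π_two q).1 h
    have key : ∀ n : ℤ, ∃ (r : Fin 2) (m : ℤ), (n : ℝ) = r.val + 2 * m := by
      intro n
      refine ⟨⟨(n % 2).toNat, by omega⟩, n / 2, ?_⟩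
      have : n = (n % 2).toNat + 2 * (n / 2) := by omega
      exact_mod_cast this
    obtain ⟨a0, a1, ha⟩ := key a
    obtain ⟨b0, b1, hb⟩ := key b
    obtain ⟨c0, c1, hc⟩ := key c
    obtain ⟨d0, d1, hd⟩ := key d
    refine ⟨(a0, b0, c0, d0), (π_eq _ _).2 ⟨a1, b1, c1, d1, ?_⟩⟩
    simp only [mkq_re, mkq_imI, mkq_imJ, mkq_imK, ha, hb, hc, hd]
    refine ⟨?_, ?_, ?_, ?_⟩ <;> ring
  · rintro ⟨⟨a, b, c, d⟩, h⟩
    rw [← h]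
    exact (π_two _).2 ⟨a.val, b.val, c.val, d.val, by simp⟩

theorem tors_card : Set.ncard {x : T | x + x = 0} = 16 := by
  rw [tors_range, ← Set.image_univ, Set.ncard_image_of_injective _ tors_inj, Set.ncard_univ]
  simp

/-- The explicit formula for the square of `(t; s/2)`. -/
theorem sq_formula (x : ℍ[ℝ]) : qt * (qt * x + qs / 2) + qs / 2 =
    mkq ((-x.re - x.imI - x.imJ - x.imK) / 2 + 1 / 4) ((x.re - x.imI - x.imJ + x.imK) / 2 + 3 / 4)
      ((x.re + x.imI - x.imJ - x.imK) / 2 - 1 / 4) ((x.re - x.imI + x.imJ - x.imK) / 2 + 1 / 4) := by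
  rw [qs_half_eq, qt_eq]
  ext <;> simp <;> ring

theorem fixed_eq (q : ℍ[ℝ]) (h2 : π q + π q = 0)
    (hw : π (qt * (qt * q + qs / 2) + qs / 2) = π q) : π q = π (mkq 0 (1 / 2) 0 0) := by
  obtain ⟨a, b, c, d, rfl⟩ := (π_two q).1 h2
  rw [sq_formula] at hw
  obtain ⟨A, B, C, D, h1, h2, h3, h4⟩ := (π_eq _ _).1 hw
  simp only [mkq_re, mkq_imI, mkq_imJ, mkq_imK] at h1 h2 h3 h4
  have e1 : 3 * a + b + c + 3 * d - 1 = 4 * A + 2 * D := by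
    have : (3 * a + b + c + 3 * d - 1 : ℝ) = 4 * A + 2 * D := by linarith
    exact_mod_cast this
  have e2 : - a + 3 * b + c + d - 3 = 4 * B + 2 * D := by
    have : (- a + 3 * b + c + d - 3 : ℝ) = 4 * B + 2 * D := by linarith
    exact_mod_cast this
  have e3 : - a - b + 3 * c + d + 1 = 4 * C + 2 * D := by
    have : (- a - b + 3 * c + d + 1 : ℝ) = 4 * C + 2 * D := by linarith
    exact_mod_cast this
  have e4 : - a + b - c + d - 1 = 2 * D := by
    have : (- a + b - c + d - 1 : ℝ) = 2 * D := by linarith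
    exact_mod_cast this
  obtain ⟨a1, rfl⟩ : ∃ m, a = 2 * m := ⟨a / 2, by omega⟩
  obtain ⟨b1, rfl⟩ : ∃ m, b = 2 * m + 1 := ⟨b / 2, by omega⟩
  obtain ⟨c1, rfl⟩ : ∃ m, c = 2 * m := ⟨c / 2, by omega⟩
  obtain ⟨d1, rfl⟩ : ∃ m, d = 2 * m := ⟨d / 2, by omega⟩
  refine (π_eq _ _).2 ⟨-a1, -b1, -c1, -d1, ?_⟩
  simp only [mkq_re, mkq_imI, mkq_imJ, mkq_imK]
  push_cast
  refine ⟨?_, ?_, ?_, ?_⟩ <;> ring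

theorem order_three_automorphism_fixes_one_two_torsion_point
    (ft fi fj fk : T → T)
    (hft : ∀ x : ℍ[ℝ], ft (π x) = π (qt * x + qs / 2))
    (hfi : ∀ x : ℍ[ℝ], fi (π x) = π (qi * x))
    (hfj : ∀ x : ℍ[ℝ], fj (π x) = π (qj * x + qα))
    (hfk : ∀ x : ℍ[ℝ], fk (π x) = π (qk * x + qα)) :
    -- T has exactly sixteen 2-torsion points
    Set.ncard {x : T | x + x = 0} = 16 ∧
    -- w = (t;s/2)² has order exactly 3
    (ft ∘ ft) ∘ (ft ∘ ft) ∘ (ft ∘ ft) = id ∧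
    ft ∘ ft ≠ id ∧
    -- w fixes exactly one 2-torsion point
    (∃! x : T, x + x = 0 ∧ (ft ∘ ft) x = x) ∧
    -- that point is fixed by none of (i;0), j', k'
    (∀ x : T, x + x = 0 → (ft ∘ ft) x = x →
      fi x ≠ x ∧ fj x ≠ x ∧ fk x ≠ x) := by
  have hw : ∀ x, (ft ∘ ft) (π x) = π (qt * (qt * x + qs / 2) + qs / 2) := by
    intro x; rw [Function.comp_apply, hft, hft]
  refine ⟨tors_card, ?_, ?_, ?_, ?_⟩
  · funext x
    obtain ⟨q, rfl⟩ := π_surj x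
    change (ft ∘ ft) ((ft ∘ ft) ((ft ∘ ft) (π q))) = π q
    rw [hw, hw, hw]
    congr 1
    simp only [sq_formula]
    ext <;> simp only [mkq_re, mkq_imI, mkq_imJ, mkq_imK] <;> ring
  · intro h
    have h1 := congrFun h (π 0)
    rw [hw, sq_formula, id] at h1
    obtain ⟨A, B, C, D, h1, h2, h3, h4⟩ := (π_eq _ _).1 h1
    simp at h1 h2 h3 h4
    have : (-1 : ℝ) = 2 * D := by linarith
    have : (-1 : ℤ) = 2 * D := by exact_mod_cast this
    omega
  · refine ⟨π (mkq 0 (1 / 2) 0 0), ⟨(π_two _).2 ⟨0, 1, 0, 0, by simp⟩, ?_⟩, ?_⟩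
    · rw [hw, sq_formula]
      refine (π_eq _ _).2 ⟨0, 0, 0, 0, ?_⟩
      norm_num
    · rintro y ⟨h2, h3⟩
      obtain ⟨q, rfl⟩ := π_surj y
      rw [hw] at h3
      exact fixed_eq q h2 h3
  · intro y h2 h3
    obtain ⟨q, rfl⟩ := π_surj y
    rw [hw] at h3
    rw [fixed_eq q h2 h3, hfi, hfj, hfk, qα_eq]
    refine ⟨?_, ?_, ?_⟩ <;> intro h <;>
      obtain ⟨A, B, C, D, h1, h2, h3, h4⟩ := (π_eq _ _).1 h <;>
      simp [qi_eq, qj_eq, qk_eq] at h1 h2 h3 h4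
    · have : (1 : ℝ) = 2 * A := by linarith
      have : (1 : ℤ) = 2 * A := by exact_mod_cast this
      omega
    · have : (-1 : ℝ) = 2 * A + D := by linarith
      have : (-1 : ℤ) = 2 * A + D := by exact_mod_cast this
      have : (0 : ℝ) = 2 * C + D := by linarith
      have : (0 : ℤ) = 2 * C + D := by exact_mod_cast this
      omega
    · have : (-1 : ℝ) = 2 * A := by linarith
      have : (-1 : ℤ) = 2 * A := by exact_mod_cast this
      omega
end
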